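/- arXiv:2205.07223 — 2 statements merged into one kernel-verified Lean document; each statement's English description precedes it below -/
import Mathlib

section
/- Under the wide-range Hedge setup, suppose the sequence (p^t)_{t=1}^T is consistent with wide-range Hedge, i.e. for every t ∈ {1,…,T} the stationarity equation ∑_{(b,ψ)∈ℐ} w^{t−1}(b,ψ)·S^t_b·p^t = ∑_{(b,ψ)∈ℐ} w^{t−1}(b,ψ)·S^t_b·(ψ∘p^t) holds as an equality of vectors in ℝ^A. Then for every b ∈ B^s and every swap modification ψ ∈ Ψ^s, the wide-range regret satisfies ∑_{t=1}^T S^t_b·(⟨p^t, ℓ^t⟩ − ⟨ψ∘p^t, ℓ^t⟩) ≤ η·∑_{t=1}^T ‖ℓ^t‖_∞·S^t_b·⟨p^t, ℓ^t⟩ + log((|B^s| + |B^e|)·A^A)/η. -/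
/-!
The proof is the potential argument for exponential weights. Let `W t` be the total weight
`∑_{(b,ψ) ∈ ℐ} w^t(b,ψ)`.

* `W` does not increase. With `L = ‖ℓ^t‖_∞`, `β = exp (-η L)`, `u = ⟨p^t, ℓ^t⟩` and
  `v = ⟨ψ∘p^t, ℓ^t⟩`, both in `[0, L]`, convexity of the exponential gives
  `exp (-η S v) ≤ 1 - (1 - β) S v / L` and `exp (η β S u) ≤ 1 + (1 - β) S u / L`, so the weight of
  `(b,ψ)` is multiplied by at most `1 + ((1 - β) / L) S (u - v)` (`exp_step_le`). The weighted sum of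
  the terms `S (u - v)` vanishes by the stationarity equation.
* The prior weights are balanced: `W 0 = (|B^s| + |B^e|) A^A * A` (`sum_prior`).

Since `w^T(b,ψ) ≤ W T ≤ W 0` and the prior of a swap index is `A`, taking logarithms bounds
`η ∑_t S (exp (-η L) u - v)` by `log ((|B^s| + |B^e|) A^A)`; the inequality
`exp (-η L) ≥ 1 - η L` then turns this into the regret bound.
-/

open Finset

/-- Pushforward of a vector `p` on `Fin A` under a map `ψ : Fin A → Fin A`:
`(ψ∘p)(a) = ∑_{a' : ψ(a') = a} p(a')`. -/
def pushf {A : ℕ} (ψ : Fin A → Fin A) (p : Fin A → ℝ) : Fin A → ℝ :=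
  fun a => ∑ a' ∈ Finset.univ.filter (fun a' => ψ a' = a), p a'

/-- Standard inner product on `ℝ^A`. -/
def ip {A : ℕ} (p ℓ : Fin A → ℝ) : ℝ := ∑ a, p a * ℓ a

/-- Sup norm `‖ℓ‖_∞ = max_a ℓ(a)` (for nonempty `Fin A`). -/
noncomputable def supNorm {A : ℕ} (ℓ : Fin A → ℝ) : ℝ := sSup (Set.range ℓ)

/-- The set `Ψ^e` of external (constant) modifications on `Fin A`. -/
def PsiE (A : ℕ) : Finset (Fin A → Fin A) :=
  Finset.univ.image fun a => Function.const (Fin A) a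

/-- The chord bound for the exponential on the segment from `0` to `c`. -/
lemma exp_mul_le_chord (c y : ℝ) (h0 : 0 ≤ y) (h1 : y ≤ 1) :
    Real.exp (y * c) ≤ 1 + y * (Real.exp c - 1) := by
  have h := convexOn_exp.2 (Set.mem_univ (0 : ℝ)) (Set.mem_univ c)
    (sub_nonneg.2 h1) h0 (by ring)
  simp only [smul_eq_mul, mul_zero, zero_add, Real.exp_zero, mul_one] at h
  linarith

/-- One multiplicative update is dominated by an affine function of `s * (u - v)` whose slope does not
depend on `s`, `u`, `v`. For `L = 0` the slope is the junk value `0`, and `u = v = 0`. -/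
lemma exp_step_le (η L s u v : ℝ) (hη : 0 < η) (hs0 : 0 ≤ s) (hs1 : s ≤ 1)
    (hu0 : 0 ≤ u) (huL : u ≤ L) (hv0 : 0 ≤ v) (hvL : v ≤ L) :
    Real.exp (η * (Real.exp (-η * L) * s * u - s * v))
      ≤ 1 + (1 - Real.exp (-η * L)) / L * (s * (u - v)) := by
  rcases (hu0.trans huL).eq_or_lt with hL | hL
  · obtain rfl : u = 0 := by linarith
    obtain rfl : v = 0 := by linarith
    simp
  set β := Real.exp (-η * L) with hβ
  have hβ0 : 0 < β := Real.exp_pos _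
  have hβ1 : β ≤ 1 := Real.exp_le_one_iff.2 (by nlinarith)
  have hy : ∀ x, 0 ≤ x → x ≤ L → 0 ≤ s * x / L ∧ s * x / L ≤ 1 := fun x hx0 hxL =>
    ⟨by positivity, by rw [div_le_one hL]; nlinarith⟩
  obtain ⟨hyu0, hyu1⟩ := hy u hu0 huL
  obtain ⟨hyv0, hyv1⟩ := hy v hv0 hvL
  have e1 : Real.exp (s * v / L * (-η * L)) ≤ 1 - s * v / L * (1 - β) := by
    have := exp_mul_le_chord (-η * L) _ hyv0 hyv1
    rw [← hβ] at this
    linarith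
  have e2 : Real.exp (β * (s * u / L) * (η * L)) ≤ 1 + s * u / L * (1 - β) := by
    have h := exp_mul_le_chord (η * L) (β * (s * u / L)) (by positivity) (by nlinarith)
    have hinv : β * Real.exp (η * L) = 1 := by
      rw [hβ, ← Real.exp_add]; simp
    have : β * (s * u / L) * (Real.exp (η * L) - 1)
        = s * u / L * (β * Real.exp (η * L) - β) := by ring
    rwa [this, hinv] at h
  have hexp : η * (β * s * u - s * v)
      = s * v / L * (-η * L) + β * (s * u / L) * (η * L) := by
    field_simp
    ring
  rw [hexp, Real.exp_add]
  calc _ ≤ (1 - s * v / L * (1 - β)) * (1 + s * u / L * (1 - β)) :=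
        mul_le_mul e1 e2 (Real.exp_pos _).le (le_trans (Real.exp_pos _).le e1)
    _ ≤ 1 - s * v / L * (1 - β) + s * u / L * (1 - β) := by
        have : 0 ≤ (s * v / L * (1 - β)) * (s * u / L * (1 - β)) := by
          have : 0 ≤ 1 - β := by linarith
          positivity
        linarith
    _ = _ := by ring

lemma ip_pushf {A : ℕ} (ψ : Fin A → Fin A) (p ℓ : Fin A → ℝ) :
    ip (pushf ψ p) ℓ = ∑ a, p a * ℓ (ψ a) := by
  unfold ip pushf
  rw [← Finset.sum_fiberwise Finset.univ ψ fun a => p a * ℓ (ψ a)]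
  refine Finset.sum_congr rfl fun a _ => ?_
  rw [Finset.sum_mul]
  refine Finset.sum_congr rfl fun a' ha' => ?_
  rw [(Finset.mem_filter.1 ha').2]

/-- An average of losses under a probability vector lies between `0` and the sup norm. -/
lemma avg_mem {A : ℕ} (ψ : Fin A → Fin A) (p ℓ : Fin A → ℝ) (hℓ : ∀ a, 0 ≤ ℓ a)
    (hp0 : ∀ a, 0 ≤ p a) (hp1 : ∑ a, p a = 1) :
    0 ≤ ∑ a, p a * ℓ (ψ a) ∧ ∑ a, p a * ℓ (ψ a) ≤ supNorm ℓ := by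
  refine ⟨Finset.sum_nonneg fun a _ => mul_nonneg (hp0 a) (hℓ _), ?_⟩
  calc ∑ a, p a * ℓ (ψ a) ≤ ∑ a, p a * supNorm ℓ :=
        Finset.sum_le_sum fun a _ => mul_le_mul_of_nonneg_left
          (le_csSup (Set.finite_range ℓ).bddAbove ⟨ψ a, rfl⟩) (hp0 a)
    _ = supNorm ℓ := by rw [← Finset.sum_mul, hp1, one_mul]

lemma card_PsiE (A : ℕ) (hA : 1 ≤ A) : (PsiE A).card = A := by
  have : Nonempty (Fin A) := ⟨⟨0, hA⟩⟩
  unfold PsiE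
  rw [Finset.card_image_of_injective _ Function.const_injective]
  simp

/-- The prior weights are chosen so that every time-selection index, swap or external, carries the
same total mass `A ^ A * A`. -/
lemma sum_prior (A : ℕ) (hA : 1 ≤ A) {B : Type} [DecidableEq B] (Bs Be : Finset B)
    (hdisj : Disjoint Bs Be) :
    ∑ x ∈ Bs ×ˢ (Finset.univ : Finset (Fin A → Fin A)) ∪ Be ×ˢ PsiE A,
        (if x.1 ∈ Be then (A : ℝ) ^ A else (A : ℝ))
      = ((Bs.card : ℝ) + Be.card) * (A : ℝ) ^ A * A := by
  rw [Finset.sum_union (Finset.disjoint_product.2 (Or.inl hdisj))]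
  have h1 : ∑ x ∈ Bs ×ˢ (Finset.univ : Finset (Fin A → Fin A)),
      (if x.1 ∈ Be then (A : ℝ) ^ A else (A : ℝ)) = Bs.card * (A : ℝ) ^ A * A := by
    rw [Finset.sum_congr rfl fun x hx =>
      if_neg (Finset.disjoint_left.1 hdisj (Finset.mem_product.1 hx).1)]
    simp [Finset.card_product]
  have h2 : ∑ x ∈ Be ×ˢ PsiE A,
      (if x.1 ∈ Be then (A : ℝ) ^ A else (A : ℝ)) = Be.card * A * (A : ℝ) ^ A := by
    rw [Finset.sum_congr rfl fun x hx => if_pos (Finset.mem_product.1 hx).1]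
    simp [Finset.card_product, card_PsiE A hA]
  rw [h1, h2]
  ring

/-- Wide-range regret bound of wide-range Hedge, swap part: if the play `(p^t)` satisfies
the stationarity equations of wide-range Hedge, then for every swap time-selection index
`b ∈ B^s` and every swap modification `ψ`,
`∑_t S^t_b (⟨p^t, ℓ^t⟩ − ⟨ψ∘p^t, ℓ^t⟩)
  ≤ η ∑_t ‖ℓ^t‖_∞ S^t_b ⟨p^t, ℓ^t⟩ + log((|B^s|+|B^e|)·A^A)/η`. -/
theorem stmt0
    (A : ℕ) (hA : 1 ≤ A)
    (B : Type) [Fintype B] [DecidableEq B]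
    (Bs Be : Finset B) (hdisj : Disjoint Bs Be)
    (hBs : Bs.Nonempty) (hBe : Be.Nonempty)
    (ℐ : Finset (B × (Fin A → Fin A)))
    (hℐ : ℐ = Bs ×ˢ (Finset.univ : Finset (Fin A → Fin A)) ∪ Be ×ˢ PsiE A)
    (T : ℕ) (hT : 1 ≤ T)
    (S : ℕ → B → ℝ)
    (hS : ∀ t ∈ Finset.Icc 1 T, ∀ b ∈ Bs ∪ Be, 0 ≤ S t b ∧ S t b ≤ 1)
    (ℓ : ℕ → Fin A → ℝ)
    (hℓ : ∀ t ∈ Finset.Icc 1 T, ∀ a, 0 ≤ ℓ t a)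
    (η : ℝ) (hη : 0 < η)
    (p : ℕ → Fin A → ℝ)
    (hp : ∀ t ∈ Finset.Icc 1 T, (∀ a, 0 ≤ p t a) ∧ ∑ a, p t a = 1)
    (w : ℕ → B × (Fin A → Fin A) → ℝ)
    (hw : ∀ t, ∀ bψ : B × (Fin A → Fin A), w t bψ =
      (if bψ.1 ∈ Be then (A : ℝ) ^ (A : ℕ) else (A : ℝ)) *
        Real.exp (η * ∑ s ∈ Finset.Icc 1 t,
          (Real.exp (-η * supNorm (ℓ s)) * S s bψ.1 * ip (p s) (ℓ s)
            - S s bψ.1 * ip (pushf bψ.2 (p s)) (ℓ s))))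
    (hstat : ∀ t ∈ Finset.Icc 1 T, ∀ a : Fin A,
      ∑ bψ ∈ ℐ, w (t - 1) bψ * S t bψ.1 * p t a
        = ∑ bψ ∈ ℐ, w (t - 1) bψ * S t bψ.1 * pushf bψ.2 (p t) a) :
    ∀ b ∈ Bs, ∀ ψ : Fin A → Fin A,
      ∑ t ∈ Finset.Icc 1 T, S t b * (ip (p t) (ℓ t) - ip (pushf ψ (p t)) (ℓ t))
        ≤ η * ∑ t ∈ Finset.Icc 1 T, supNorm (ℓ t) * S t b * ip (p t) (ℓ t)
          + Real.log (((Bs.card : ℝ) + (Be.card : ℝ)) * (A : ℝ) ^ (A : ℕ)) / η := by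
  intro b hb ψ
  have hA0 : (0 : ℝ) < A := by exact_mod_cast hA
  have hmem : ∀ x ∈ ℐ, x.1 ∈ Bs ∪ Be := by
    intro x hx
    rw [hℐ, Finset.mem_union, Finset.mem_product, Finset.mem_product] at hx
    exact Finset.mem_union.2 (hx.imp And.left And.left)
  have hwpos : ∀ t x, 0 < w t x := by
    intro t x
    rw [hw]
    have : 0 < (if x.1 ∈ Be then (A : ℝ) ^ (A : ℕ) else (A : ℝ)) := by
      split_ifs <;> positivity
    positivity
  have hu : ∀ t ∈ Finset.Icc 1 T, 0 ≤ ip (p t) (ℓ t) ∧ ip (p t) (ℓ t) ≤ supNorm (ℓ t) :=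
    fun t ht => avg_mem id (p t) (ℓ t) (hℓ t ht) (hp t ht).1 (hp t ht).2
  have hv : ∀ t ∈ Finset.Icc 1 T, ∀ φ : Fin A → Fin A,
      0 ≤ ip (pushf φ (p t)) (ℓ t) ∧ ip (pushf φ (p t)) (ℓ t) ≤ supNorm (ℓ t) := by
    intro t ht φ
    rw [ip_pushf]
    exact avg_mem φ (p t) (ℓ t) (hℓ t ht) (hp t ht).1 (hp t ht).2
  -- Pairing the stationarity equation with the loss vector.
  have hzero : ∀ t ∈ Finset.Icc 1 T, ∑ x ∈ ℐ, w (t - 1) x *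
      (S t x.1 * (ip (p t) (ℓ t) - ip (pushf x.2 (p t)) (ℓ t))) = 0 := by
    intro t ht
    have hpair : ∀ q : B × (Fin A → Fin A) → Fin A → ℝ,
        ∑ x ∈ ℐ, w (t - 1) x * S t x.1 * ip (q x) (ℓ t)
          = ∑ a, (∑ x ∈ ℐ, w (t - 1) x * S t x.1 * q x a) * ℓ t a := by
      intro q
      simp only [ip, Finset.mul_sum, Finset.sum_mul]
      rw [Finset.sum_comm]
      exact Finset.sum_congr rfl fun a _ => Finset.sum_congr rfl fun x _ => by ring
    have h1 := hpair fun _ => p t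
    have h2 := hpair fun x => pushf x.2 (p t)
    simp only [hstat t ht] at h1
    rw [← h2] at h1
    rw [← sub_eq_zero, ← Finset.sum_sub_distrib] at h1
    rw [← h1]
    exact Finset.sum_congr rfl fun x _ => by ring
  have hstep : ∀ t ∈ Finset.Icc 1 T, ∑ x ∈ ℐ, w t x ≤ ∑ x ∈ ℐ, w (t - 1) x := by
    intro t ht
    have hsucc : t - 1 + 1 = t := Nat.sub_add_cancel (Finset.mem_Icc.1 ht).1
    have hrec : ∀ x, w t x = w (t - 1) x *
        Real.exp (η * (Real.exp (-η * supNorm (ℓ t)) * S t x.1 * ip (p t) (ℓ t)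
          - S t x.1 * ip (pushf x.2 (p t)) (ℓ t))) := by
      intro x
      have h := hw (t - 1 + 1) x
      rw [Finset.sum_Icc_succ_top (by omega), mul_add, Real.exp_add, ← mul_assoc,
        ← hw (t - 1) x, hsucc] at h
      exact h
    calc ∑ x ∈ ℐ, w t x
        ≤ ∑ x ∈ ℐ, (w (t - 1) x + (1 - Real.exp (-η * supNorm (ℓ t))) / supNorm (ℓ t) *
            (w (t - 1) x * (S t x.1 * (ip (p t) (ℓ t) - ip (pushf x.2 (p t)) (ℓ t))))) := by
          refine Finset.sum_le_sum fun x hx => ?_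
          obtain ⟨hs0, hs1⟩ := hS t ht x.1 (hmem x hx)
          have h := mul_le_mul_of_nonneg_left
            (exp_step_le η (supNorm (ℓ t)) (S t x.1) _ _ hη hs0 hs1 (hu t ht).1 (hu t ht).2
              (hv t ht x.2).1 (hv t ht x.2).2) (hwpos (t - 1) x).le
          rw [hrec x]
          linarith
      _ = ∑ x ∈ ℐ, w (t - 1) x := by
          rw [Finset.sum_add_distrib, ← Finset.mul_sum, hzero t ht, mul_zero, add_zero]
  have hpot : ∀ t ≤ T, ∑ x ∈ ℐ, w t x ≤ ∑ x ∈ ℐ, w 0 x := by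
    intro t
    induction t with
    | zero => exact fun _ => le_rfl
    | succ k ih =>
      exact fun hk => (hstep (k + 1) (Finset.mem_Icc.2 ⟨by omega, hk⟩)).trans (ih (by omega))
  have hW0 : ∑ x ∈ ℐ, w 0 x = ((Bs.card : ℝ) + Be.card) * (A : ℝ) ^ A * A := by
    rw [← sum_prior A hA Bs Be hdisj, hℐ]
    exact Finset.sum_congr rfl fun x _ => by rw [hw]; simp
  have hbI : (b, ψ) ∈ ℐ := by
    rw [hℐ]
    exact Finset.mem_union_left _ (Finset.mk_mem_product hb (Finset.mem_univ _))
  have hfin : w T (b, ψ) ≤ ((Bs.card : ℝ) + Be.card) * (A : ℝ) ^ A * A :=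
    ((Finset.single_le_sum (fun x _ => (hwpos T x).le) hbI).trans (hpot T le_rfl)).trans_eq hW0
  rw [hw, if_neg (Finset.disjoint_left.1 hdisj hb), mul_comm (A : ℝ)] at hfin
  have hlog := Real.log_le_log (Real.exp_pos _) (le_of_mul_le_mul_right hfin hA0)
  rw [Real.log_exp, mul_comm η, ← le_div_iff₀ hη] at hlog
  refine le_trans ?_ (add_le_add_right hlog _)
  rw [Finset.mul_sum, ← Finset.sum_add_distrib]
  refine Finset.sum_le_sum fun t ht => ?_
  have hs0 := (hS t ht b (Finset.mem_union_left _ hb)).1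
  have hexp := Real.add_one_le_exp (-η * supNorm (ℓ t))
  have h := mul_le_mul_of_nonneg_right hexp (mul_nonneg hs0 (hu t ht).1)
  dsimp only
  linarith
end

section
/- For all integers K ≥ 1 and H ≥ 1, the cardinality of the set {(h, W̄) : 1 ≤ h ≤ H, W̄ ⊆ {1,…,h−1}, |W̄| = min(K−1, h−1)} plus the cardinality of the set {(h, h', W) : 1 ≤ h' < h ≤ H, W ⊆ {1,…,h'}, |W| = K, max(W) = h'} equals C(H+1, min(K,H)+1) + min(K,H) − 1, where C(n,k) denotes the binomial coefficient (with C(n,k) = 0 when k > n). -/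
/-!
Writing `h = n + 1`, the Type-I policies at level `h` are the `min (K-1) n`-subsets of `{1,…,n}`.
A Type-II policy is determined by `h` and `W`, since `h'` is the maximum of `W`, so at level `h`
they are the `K`-subsets of `{1,…,n}`. Summing over `n < H` with the hockey-stick identity gives
`C(H, K) + min (K-1) H` (the second term collects the levels at which the minimum is `n` and
the only subset is the full one) and `C(H, K+1)`. Pascal's rule combines the two when `K ≤ H`;
when `H < K` both binomials vanish and the total is `H`.
-/

theorem sum_choose_eq (K H : ℕ) :
    ∑ n ∈ Finset.range H, Nat.choose n K = Nat.choose H (K + 1) := by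
  induction H with
  | zero => simp
  | succ H ih => rw [Finset.sum_range_succ, ih, Nat.choose_succ_succ, add_comm]

/-- Hockey-stick identity with truncated lower index: each `n < k` contributes `C(n, n) = 1`
instead of `C(n, k) = 0`. -/
theorem sum_choose_min_eq (k H : ℕ) :
    ∑ n ∈ Finset.range H, Nat.choose n (min k n) = Nat.choose H (k + 1) + min k H := by
  induction H with
  | zero => simp
  | succ H ih =>
    rw [Finset.sum_range_succ, ih, Nat.choose_succ_succ']
    rcases le_or_gt k H with h | h
    · rw [min_eq_left h, min_eq_left (by omega : k ≤ H + 1)]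
      omega
    · rw [min_eq_right h.le, min_eq_right (by omega : H + 1 ≤ k), Nat.choose_self,
        Nat.choose_eq_zero_of_lt h]
      omega

theorem card_typeI (K H : ℕ) :
    ((Finset.Icc 1 H ×ˢ (Finset.Icc 1 H).powerset).filter
        (fun x : ℕ × Finset ℕ =>
          x.2 ⊆ Finset.Icc 1 (x.1 - 1) ∧ x.2.card = min (K - 1) (x.1 - 1))).card
      = ∑ n ∈ Finset.range H, Nat.choose n (min (K - 1) n) := by
  trans ((Finset.range H).sigma
    (fun n => Finset.powersetCard (min (K - 1) n) (Finset.Icc 1 n))).card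
  · refine Finset.card_nbij' (fun x => ⟨x.1 - 1, x.2⟩) (fun y => (y.1 + 1, y.2)) ?_ ?_ ?_ ?_
    · rintro ⟨h, W⟩ hx
      simp only [Finset.coe_filter, Set.mem_ofPred_eq, Finset.mem_product, Finset.mem_Icc,
        Finset.mem_powerset, Finset.mem_coe, Finset.mem_sigma, Finset.mem_range,
        Finset.mem_powersetCard] at hx ⊢
      exact ⟨by omega, hx.2⟩
    · rintro ⟨n, W⟩ hy
      simp only [Finset.coe_filter, Set.mem_ofPred_eq, Finset.mem_product, Finset.mem_Icc,
        Finset.mem_powerset, Finset.mem_coe, Finset.mem_sigma, Finset.mem_range,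
        Finset.mem_powersetCard, Nat.add_sub_cancel] at hy ⊢
      exact ⟨⟨by omega, hy.2.1.trans (Finset.Icc_subset_Icc_right (by omega))⟩, hy.2⟩
    · rintro ⟨h, W⟩ hx
      simp only [Finset.coe_filter, Set.mem_ofPred_eq, Finset.mem_product, Finset.mem_Icc] at hx
      simp only [Prod.mk.injEq, and_true]
      omega
    · rintro ⟨n, W⟩ _
      simp
  · simp [Finset.card_sigma]

theorem card_typeII (K H : ℕ) (hK : 1 ≤ K) :
    ((Finset.Icc 1 H ×ˢ Finset.Icc 1 H ×ˢ (Finset.Icc 1 H).powerset).filter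
        (fun x : ℕ × ℕ × Finset ℕ =>
          x.2.1 < x.1 ∧ x.2.2 ⊆ Finset.Icc 1 x.2.1 ∧ x.2.2.card = K
            ∧ x.2.2.max = (x.2.1 : WithBot ℕ))).card
      = ∑ n ∈ Finset.range H, Nat.choose n K := by
  trans ((Finset.range H).sigma (fun n => Finset.powersetCard K (Finset.Icc 1 n))).card
  · -- `K ≥ 1` makes `W` nonempty, so the default value of `unbotD` is never used.
    refine Finset.card_nbij' (fun x => ⟨x.1 - 1, x.2.2⟩)
      (fun y => (y.1 + 1, y.2.max.unbotD 0, y.2)) ?_ ?_ ?_ ?_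
    · rintro ⟨h, m, W⟩ hx
      simp only [Finset.coe_filter, Set.mem_ofPred_eq, Finset.mem_product, Finset.mem_Icc,
        Finset.mem_powerset, Finset.mem_coe, Finset.mem_sigma, Finset.mem_range,
        Finset.mem_powersetCard] at hx ⊢
      exact ⟨by omega, hx.2.2.1.trans (Finset.Icc_subset_Icc_right (by omega)), hx.2.2.2.1⟩
    · rintro ⟨n, W⟩ hy
      simp only [Finset.coe_filter, Set.mem_ofPred_eq, Finset.mem_product, Finset.mem_Icc,
        Finset.mem_powerset, Finset.mem_coe, Finset.mem_sigma, Finset.mem_range,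
        Finset.mem_powersetCard] at hy ⊢
      obtain ⟨hn, hW, hc⟩ := hy
      obtain ⟨m, hm⟩ := Finset.max_of_nonempty (Finset.card_pos.mp (by omega : 0 < W.card))
      have hmn := Finset.mem_Icc.mp (hW (Finset.mem_of_max hm))
      rw [hm]
      simp only [WithBot.unbotD_coe]
      refine ⟨⟨by omega, by omega, hW.trans (Finset.Icc_subset_Icc_right (by omega))⟩,
        by omega, fun a ha => ?_, hc, rfl⟩
      exact Finset.mem_Icc.mpr ⟨(Finset.mem_Icc.mp (hW ha)).1, Finset.le_max_of_eq ha hm⟩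
    · rintro ⟨h, m, W⟩ hx
      simp only [Finset.coe_filter, Set.mem_ofPred_eq, Finset.mem_product, Finset.mem_Icc] at hx
      have hm : W.max.unbotD 0 = m := by rw [hx.2.2.2.2]; rfl
      simp only [hm, Prod.mk.injEq, and_true]
      omega
    · rintro ⟨n, W⟩ _
      simp
  · simp [Finset.card_sigma]

/-- The exact episode count of one call of the two sampling subroutines in Balanced K-EFR:
the number of Type-I sampling policies `(h, W̄)` with `1 ≤ h ≤ H`, `W̄ ⊆ {1,…,h−1}`,
`|W̄| = min(K−1, h−1)`, plus the number of Type-II sampling policies `(h, h', W)` with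
`1 ≤ h' < h ≤ H`, `W ⊆ {1,…,h'}`, `|W| = K`, `max(W) = h'`, equals
`C(H+1, min(K,H)+1) + min(K,H) − 1`. -/
theorem stmt9 (K H : ℕ) (hK : 1 ≤ K) (hH : 1 ≤ H) :
    ((Finset.Icc 1 H ×ˢ (Finset.Icc 1 H).powerset).filter
        (fun x : ℕ × Finset ℕ =>
          x.2 ⊆ Finset.Icc 1 (x.1 - 1) ∧ x.2.card = min (K - 1) (x.1 - 1))).card
    + ((Finset.Icc 1 H ×ˢ Finset.Icc 1 H ×ˢ (Finset.Icc 1 H).powerset).filter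
        (fun x : ℕ × ℕ × Finset ℕ =>
          x.2.1 < x.1 ∧ x.2.2 ⊆ Finset.Icc 1 x.2.1 ∧ x.2.2.card = K
            ∧ x.2.2.max = (x.2.1 : WithBot ℕ))).card
    = Nat.choose (H + 1) (min K H + 1) + min K H - 1 := by
  rw [card_typeI, card_typeII K H hK, sum_choose_eq, sum_choose_min_eq]
  obtain ⟨k, rfl⟩ : ∃ k, K = k + 1 := ⟨K - 1, by omega⟩
  rw [Nat.add_sub_cancel]
  rcases le_or_gt (k + 1) H with h | h
  · rw [min_eq_left h, min_eq_left (by omega : k ≤ H), Nat.choose_succ_succ H (k + 1)]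
    simp only [Nat.succ_eq_add_one]
    omega
  · rw [min_eq_right h.le, min_eq_right (by omega : H ≤ k), Nat.choose_self,
      Nat.choose_eq_zero_of_lt h, Nat.choose_eq_zero_of_lt (by omega : H < k + 1 + 1)]
    omega
end
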